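/- Let K be a commutative ring, d ≥ 1, and for j = 0,…,d−1 let n_j be a natural number and A_j, D_j ∈ K^{n_j × n_{j+1 mod d}}. For tuples P = (P_0,…,P_{d−1}) with P_j ∈ 𝒫_{n_j} and Q = (Q_0,…,Q_{d−1}) with Q_j ∈ 𝒬_{n_j}, define the n_0 × n_0 matrix M(P,Q) = ∏_{j=0}^{d−1} ((Q_j P_j) A_j (Q_{j+1 mod d} P_{j+1 mod d})^{-1} + D_j). Then for every natural number k with k ≤ n_j for all j, ∑_{P,Q} [M(P,Q)]^{(k)} = (1+1)^{n_0+⋯+n_{d−1}} · ∑_{i=0}^{k} (∏_{j=0}^{d−1} (n_j−k+i)!·(n_j−i)!/(n_j−k)!) · [A_0⋯A_{d−1}]^{(i)} · [D_0⋯D_{d−1}]^{(k−i)}, where each quotient of factorials is a natural number cast into K. -/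

import Mathlib

/-- `[A]_{S,T}`: the determinant of the submatrix of `A` with rows indexed by `S` and
columns indexed by `T`, both taken in increasing order. -/
def minorDet {K : Type} [CommRing K] {m p : ℕ} (A : Matrix (Fin m) (Fin p) K)
    (S : Finset (Fin m)) (T : Finset (Fin p)) : K :=
  if h : T.card = S.card then (A.submatrix (S.orderEmbOfFin rfl) (T.orderEmbOfFin h)).det else 0

/-- Reindex the rows of a matrix along an equality of dimensions. -/
def rowCast {K : Type} [CommRing K] {a b p : ℕ} (h : a = b) (M : Matrix (Fin a) (Fin p) K) :
    Matrix (Fin b) (Fin p) K :=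
  M.submatrix (Fin.cast h.symm) id

/-- Reindex the columns of a matrix along an equality of dimensions. -/
def colCast {K : Type} [CommRing K] {m a b : ℕ} (h : a = b) (M : Matrix (Fin m) (Fin a) K) :
    Matrix (Fin m) (Fin b) K :=
  M.submatrix id (Fin.cast h.symm)

open Fin.NatCast Fin.CommRing in
/-- Partial products `A_0 * A_1 * ⋯ * A_{m-1}` of a cyclic family of matrices
`A j : Matrix (Fin (n j)) (Fin (n (j+1))) K` for `j : Fin d`. -/
def cycProdAux {K : Type} [CommRing K] {d : ℕ} [NeZero d] {n : Fin d → ℕ}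
    (A : ∀ j : Fin d, Matrix (Fin (n j)) (Fin (n (j + 1))) K) :
    (m : ℕ) → Matrix (Fin (n 0)) (Fin (n (m : Fin d))) K
  | 0 => colCast (congrArg n (by simp)) (1 : Matrix (Fin (n 0)) (Fin (n 0)) K)
  | m + 1 => colCast (congrArg n (by push_cast; ring))
      (cycProdAux A m * A ((m : ℕ) : Fin d))

/-- The cyclic product `A_0 * A_1 * ⋯ * A_{d-1}`, an `n 0 × n 0` matrix. -/
def cycProd {K : Type} [CommRing K] {d : ℕ} [NeZero d] {n : Fin d → ℕ}
    (A : ∀ j : Fin d, Matrix (Fin (n j)) (Fin (n (j + 1))) K) :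
    Matrix (Fin (n 0)) (Fin (n 0)) K :=
  colCast (congrArg n (by simp)) (cycProdAux A d)

/-- `[A]^{(k)}`: the sum of all principal `k × k` minors of `A`. -/
def minorSum {K : Type} [CommRing K] {m : ℕ} (A : Matrix (Fin m) (Fin m) K) (k : ℕ) : K :=
  ∑ S ∈ Finset.powersetCard k (Finset.univ : Finset (Fin m)), minorDet A S S

/-- The sign matrix (diagonal matrix with entries `±1`) determined by a choice of signs `ε`. -/
def signMatrix {m : ℕ} (K : Type) [CommRing K] (ε : Fin m → Bool) : Matrix (Fin m) (Fin m) K :=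
  Matrix.diagonal (fun i => if ε i then 1 else -1)

/-!
Let `B(M)` be the block matrix on the disjoint union of the index sets with block `M_j` in position
`(j, j + 1)`. Multiplying the rows of `1 - X B(M)` in block `0` by a geometric sum gives
`det (1 - X B(M)) = det (1 - X ^ d M_0 ⋯ M_{d-1})`, so `[M_0 ⋯ M_{d-1}]^{(k)}` is, up to the sign
`(-1) ^ (k + d k)`, the sum of the principal minors of `B(M)` of size `d k`.

The factors of `M(P, Q)` have block matrix `Q P B(A) P⁻¹ Q + B(D)`, with `P` and `Q` acting on each
block. In the average over `Q` only those terms of a principal minor survive in which the entries of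
`P B(A) P⁻¹` and of `B(D)` occupy complementary principal blocks `U` and `W`. Averaging over `P`
moves `U` to an arbitrary `V` and weights a pair `(V, W)` by the number of `P` with `P W` disjoint
from `V`. A principal minor of `B(A)` on `V` vanishes unless `V` meets every block in the same
number `i` of points, and likewise for `W`, so the weight depends only on `i` and `k`.
-/

open Finset Matrix Polynomial

section PrincipalMinor

variable {ι κ R : Type*} [CommRing R]

/-- The principal minor of `M` on the index set `S`, which need not carry an order. -/
def principalMinor [DecidableEq ι] (M : Matrix ι ι R) (S : Finset ι) : R :=
  (M.submatrix (Subtype.val : S → ι) (Subtype.val : S → ι)).det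

/-- The sum of the principal minors of `M` of size `k`, that is, up to sign a coefficient of the
characteristic polynomial. -/
def principalMinorSum [Fintype ι] [DecidableEq ι] (M : Matrix ι ι R) (k : ℕ) : R :=
  ∑ S ∈ powersetCard k univ, principalMinor M S

lemma principalMinor_submatrix [DecidableEq ι] [DecidableEq κ] (M : Matrix ι ι R) (f : κ ↪ ι)
    (S : Finset κ) : principalMinor (M.submatrix f f) S = principalMinor M (S.map f) :=
  det_submatrix_equiv_self (equivMap f S) (M.submatrix Subtype.val Subtype.val)

lemma principalMinorSum_submatrix_equiv [Fintype ι] [DecidableEq ι] [Fintype κ] [DecidableEq κ]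
    (M : Matrix ι ι R) (e : κ ≃ ι) (k : ℕ) :
    principalMinorSum (M.submatrix e e) k = principalMinorSum M k := by
  rw [principalMinorSum, principalMinorSum, ← map_univ_equiv e, powersetCard_map, sum_map]
  exact sum_congr rfl fun S _ ↦ principalMinor_submatrix M e.toEmbedding S

lemma coeff_charpolyRev [Fintype ι] [DecidableEq ι] (M : Matrix ι ι R) (k : ℕ) :
    M.charpolyRev.coeff k = (-1) ^ k * principalMinorSum M k := by
  have hneg : 1 - (X : R[X]) • M.map C = 1 + (X : R[X]) • (-M).map C := by
    rw [Matrix.map_neg _ (map_neg C), smul_neg, sub_eq_add_neg]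
  rw [charpolyRev, hneg, coeff_det_one_add_X_smul_eq_sum_minors, principalMinorSum, mul_sum]
  refine sum_congr rfl fun S hS ↦ ?_
  rw [submatrix_neg, Pi.neg_apply, Pi.neg_apply, det_neg, Fintype.card_coe,
    (mem_powersetCard.1 hS).2, principalMinor]

end PrincipalMinor

section Signs

variable {ι R : Type*} [Fintype ι] [DecidableEq ι] [CommRing R]

/-- The vector of signs `±1` encoded by `ε`, with `true` for `1`. Conjugation by its diagonal
matrix is the sign change over which the minors are averaged. -/
def signVec {ι : Type*} (R : Type*) [CommRing R] (ε : ι → Bool) (x : ι) : R :=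
  if ε x then 1 else -1

lemma sum_prod_signVec_mul_prod_signVec (U V : Finset ι) :
    ∑ ε : ι → Bool, (∏ x ∈ U, signVec R ε x) * ∏ x ∈ V, signVec R ε x =
      if U = V then 2 ^ Fintype.card ι else 0 := by
  let s (x : ι) (b : Bool) : R :=
    (if x ∈ U then (if b then 1 else -1) else 1) * (if x ∈ V then (if b then 1 else -1) else 1)
  have hs (x : ι) : ∑ b, s x b = if x ∈ U ↔ x ∈ V then 2 else 0 := by
    by_cases hU : x ∈ U <;> by_cases hV : x ∈ V <;> simp [s, hU, hV, one_add_one_eq_two]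
  calc ∑ ε : ι → Bool, (∏ x ∈ U, signVec R ε x) * ∏ x ∈ V, signVec R ε x
      = ∑ ε : ι → Bool, ∏ x, s x (ε x) := by
        simp only [s, prod_mul_distrib, Fintype.prod_ite_mem, signVec]
    _ = ∏ x, if x ∈ U ↔ x ∈ V then 2 else 0 := by
        rw [← Fintype.prod_sum]; exact prod_congr rfl fun x _ ↦ hs x
    _ = if U = V then 2 ^ Fintype.card ι else 0 := by
        rw [prod_ite_zero, prod_const, card_univ]
        simp [Finset.ext_iff]

lemma det_ite_mem_mul (A D : Matrix ι ι R) (U : Finset ι) :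
    det (of fun x y ↦ if x ∈ U ↔ y ∈ U then (if y ∈ U then A x y else D x y) else 0) =
      principalMinor A U * principalMinor D Uᶜ := by
  rw [twoBlockTriangular_det _ (· ∈ U) fun x hx y hy ↦ by simp [hx, hy]]
  congr 1
  · unfold principalMinor
    congr! 1
    ext x y
    simp [toSquareBlockProp]
  · let e : {x // x ∉ U} ≃ {x // x ∈ Uᶜ} := Equiv.subtypeEquivRight fun _ ↦ mem_compl.symm
    rw [principalMinor, ← det_submatrix_equiv_self e]
    congr! 1
    ext x y
    simp [toSquareBlockProp, e, x.2, y.2]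

lemma sum_prod_signVec_mul_add {κ : Type*} [Fintype κ] [DecidableEq κ] (f : κ ↪ ι)
    (σ : Equiv.Perm κ) (a b : κ → R) :
    ∑ ε : ι → Bool, ∏ x, (signVec R ε (f (σ x)) * a x * signVec R ε (f x) + b x) =
      2 ^ Fintype.card ι *
        ∑ U : Finset κ, ∏ x, if σ x ∈ U ↔ x ∈ U then (if x ∈ U then a x else b x) else 0 := by
  have hstable (U : Finset κ) :
      (U.map σ.toEmbedding).map f = U.map f ↔ ∀ x, σ x ∈ U ↔ x ∈ U := by
    rw [map_inj, Finset.ext_iff, ← σ.forall_congr_right]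
    simp [iff_comm]
  have hsplit (U : Finset κ) :
      (∏ x, if σ x ∈ U ↔ x ∈ U then (if x ∈ U then a x else b x) else 0) =
        if (U.map σ.toEmbedding).map f = U.map f then (∏ x ∈ U, a x) * ∏ x ∈ Uᶜ, b x else 0 := by
    simp [prod_ite_zero, hstable, prod_ite, filter_notMem_eq_sdiff, compl_eq_univ_sdiff]
  simp_rw [prod_add, powerset_univ, ← compl_eq_univ_sdiff]
  rw [sum_comm, mul_sum]
  refine sum_congr rfl fun U _ ↦ ?_
  calc ∑ ε : ι → Bool,
        (∏ x ∈ U, signVec R ε (f (σ x)) * a x * signVec R ε (f x)) * ∏ x ∈ Uᶜ, b x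
      = (∑ ε : ι → Bool, (∏ x ∈ (U.map σ.toEmbedding).map f, signVec R ε x) *
          ∏ x ∈ U.map f, signVec R ε x) * ((∏ x ∈ U, a x) * ∏ x ∈ Uᶜ, b x) := by
        rw [sum_mul]
        refine sum_congr rfl fun ε _ ↦ ?_
        simp only [prod_mul_distrib, prod_map, Equiv.coe_toEmbedding]
        ring
    _ = _ := by
        rw [sum_prod_signVec_mul_prod_signVec, hsplit, ite_mul, mul_ite, zero_mul, mul_zero]

lemma sum_det_signVec_conj_add {κ : Type*} [Fintype κ] [DecidableEq κ] (f : κ ↪ ι)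
    (A D : Matrix κ κ R) :
    ∑ ε : ι → Bool, det (of fun x y ↦ signVec R ε (f x) * A x y * signVec R ε (f y) + D x y) =
      2 ^ Fintype.card ι * ∑ U : Finset κ, principalMinor A U * principalMinor D Uᶜ := by
  simp_rw [← det_ite_mem_mul, det_apply', of_apply]
  rw [sum_comm, sum_comm (s := univ (α := Finset κ))]
  simp_rw [← mul_sum, sum_prod_signVec_mul_add f, mul_left_comm, ← mul_sum]

lemma sum_map_subtype {ι M : Type*} [AddCommMonoid M] (S : Finset ι) (F : Finset ι → M) :
    ∑ U : Finset S, F (U.map (.subtype _)) = ∑ U ∈ S.powerset, F U := by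
  classical
  refine sum_nbij' (fun U ↦ U.map (.subtype _)) (fun U ↦ U.subtype (· ∈ S))
    (fun U _ ↦ mem_powerset.2 (map_subtype_subset U)) (fun _ _ ↦ mem_univ _) (fun U _ ↦ ?_)
    (fun U hU ↦ subtype_map_of_mem (mem_powerset.1 hU)) (fun _ _ ↦ rfl)
  ext x
  simp

lemma sum_powersetCard_sum_powerset {ι M : Type*} [Fintype ι] [DecidableEq ι] [AddCommMonoid M]
    (F : Finset ι → Finset ι → M) (m : ℕ) :
    ∑ S ∈ powersetCard m univ, ∑ U ∈ S.powerset, F U (S \ U) =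
      ∑ U, ∑ W, if Disjoint U W ∧ #U + #W = m then F U W else 0 := by
  simp_rw [← sum_filter, sum_sigma']
  refine sum_nbij' (fun p ↦ ⟨p.2, p.1 \ p.2⟩) (fun p ↦ ⟨p.1 ∪ p.2, p.1⟩) ?_ ?_ ?_ ?_ ?_
  · rintro ⟨S, U⟩ h
    obtain ⟨hS, hU⟩ : #S = m ∧ U ⊆ S := by simpa using h
    simpa [disjoint_sdiff] using (add_comm _ _).trans ((card_sdiff_add_card_eq_card hU).trans hS)
  · rintro ⟨U, W⟩ h
    obtain ⟨hdisj, hcard⟩ : Disjoint U W ∧ #U + #W = m := by simpa using h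
    simp only [mem_sigma, mem_powersetCard_univ, mem_powerset]
    exact ⟨(card_union_of_disjoint hdisj).trans hcard, subset_union_left⟩
  · rintro ⟨S, U⟩ h
    obtain ⟨-, hU⟩ : #S = m ∧ U ⊆ S := by simpa using h
    simp [union_eq_right.2 hU]
  · rintro ⟨U, W⟩ h
    obtain ⟨hdisj, -⟩ : Disjoint U W ∧ #U + #W = m := by simpa using h
    simp [union_sdiff_cancel_left hdisj]
  · intros; rfl

lemma sum_principalMinor_signVec_conj_add (A D : Matrix ι ι R) (S : Finset ι) :
    ∑ ε : ι → Bool,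
        principalMinor (diagonal (signVec R ε) * A * diagonal (signVec R ε) + D) S =
      2 ^ Fintype.card ι *
        ∑ U ∈ S.powerset, principalMinor A U * principalMinor D (S \ U) := by
  have hcompl (U : Finset S) : Uᶜ.map (.subtype _) = S \ U.map (.subtype _) := by
    ext x
    by_cases hx : x ∈ S <;> simp [hx]
  rw [← sum_map_subtype]
  simp_rw [← hcompl, ← principalMinor_submatrix]
  rw [← sum_det_signVec_conj_add (.subtype (· ∈ S))]
  refine sum_congr rfl fun ε _ ↦ congrArg det ?_
  ext x y
  simp

lemma sum_principalMinorSum_signVec_conj_add (A D : Matrix ι ι R) (m : ℕ) :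
    ∑ ε : ι → Bool,
        principalMinorSum (diagonal (signVec R ε) * A * diagonal (signVec R ε) + D) m =
      2 ^ Fintype.card ι * ∑ U, ∑ W,
        if Disjoint U W ∧ #U + #W = m then principalMinor A U * principalMinor D W else 0 := by
  simp only [principalMinorSum]
  rw [sum_comm, ← sum_powersetCard_sum_powerset (fun U W ↦ principalMinor A U * principalMinor D W),
    mul_sum]
  exact sum_congr rfl fun S _ ↦ sum_principalMinor_signVec_conj_add A D S

end Signs

section PermutationAverage

variable {ι R : Type*} [Fintype ι] [DecidableEq ι] [CommRing R]

lemma sum_sum_disjoint_principalMinor_submatrix {Γ : Type*} [Fintype Γ] (τ : Γ → Equiv.Perm ι)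
    (A D : Matrix ι ι R) (m : ℕ) :
    ∑ γ, ∑ U, ∑ W, (if Disjoint U W ∧ #U + #W = m then
        principalMinor (A.submatrix (τ γ) (τ γ)) U * principalMinor D W else 0) =
      ∑ V, ∑ W, if #V + #W = m then
        #{γ | Disjoint V (W.map (τ γ).toEmbedding)} * (principalMinor A V * principalMinor D W)
        else 0 := by
  have hsubst (γ : Γ) :
      ∑ U, ∑ W, (if Disjoint U W ∧ #U + #W = m then
          principalMinor (A.submatrix (τ γ) (τ γ)) U * principalMinor D W else 0) =
        ∑ V, ∑ W, if Disjoint V (W.map (τ γ).toEmbedding) ∧ #V + #W = m then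
          principalMinor A V * principalMinor D W else 0 := by
    refine Fintype.sum_equiv (τ γ).finsetCongr _ _ fun U ↦ sum_congr rfl fun W _ ↦ ?_
    simp only [Equiv.finsetCongr_apply, disjoint_map, card_map]
    rw [← principalMinor_submatrix, Equiv.coe_toEmbedding]
  simp_rw [hsubst]
  rw [sum_comm]
  refine sum_congr rfl fun V _ ↦ sum_comm.trans (sum_congr rfl fun W _ ↦ ?_)
  split_ifs with hcard
  · simp [hcard, ← sum_filter]
  · simp [hcard]

end PermutationAverage

section Counting

variable {α : Type*} [Fintype α] [DecidableEq α]

lemma exists_perm_map_eq {α : Type*} [Finite α] {W W' : Finset α} (h : #W = #W') :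
    ∃ τ : Equiv.Perm α, W.map τ.toEmbedding = W' := by
  classical
  let e : {x // x ∈ W} ≃ {x // x ∈ W'} := equivOfCardEq h
  refine ⟨e.extendSubtype, eq_of_subset_of_card_le (fun y hy ↦ ?_) (by rw [card_map, h])⟩
  obtain ⟨x, hx, rfl⟩ := mem_map.1 hy
  exact e.extendSubtype_mem x hx

lemma card_perm_disjoint_map_congr (V : Finset α) {W W' : Finset α} (h : #W = #W') :
    #{σ : Equiv.Perm α | Disjoint V (W'.map σ.toEmbedding)} =
      #{σ : Equiv.Perm α | Disjoint V (W.map σ.toEmbedding)} := by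
  obtain ⟨τ, rfl⟩ := exists_perm_map_eq h
  refine card_equiv (Equiv.mulRight τ) fun σ ↦ ?_
  have hmap : W.map (σ * τ).toEmbedding = (W.map τ.toEmbedding).map σ.toEmbedding := by
    rw [Finset.map_map]; rfl
  simp [hmap]

lemma choose_mul_card_perm_disjoint_map (V W : Finset α) :
    (Fintype.card α).choose #W * #{σ : Equiv.Perm α | Disjoint V (W.map σ.toEmbedding)} =
      (Fintype.card α).factorial * (Fintype.card α - #V).choose #W := by
  have hσ (σ : Equiv.Perm α) :
      #{W' ∈ powersetCard #W univ | Disjoint V (W'.map σ.toEmbedding)} =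
        (Fintype.card α - #V).choose #W := by
    have hset : ({W' ∈ powersetCard #W (univ : Finset α) | Disjoint V (W'.map σ.toEmbedding)}) =
        powersetCard #W (Vᶜ.map σ.symm.toEmbedding) := by
      ext W'
      rw [mem_filter, mem_powersetCard_univ, mem_powersetCard, disjoint_comm,
        ← subset_compl_iff_disjoint_right, subset_map_symm, and_comm]
    rw [hset, card_powersetCard, card_map, card_compl]
  calc (Fintype.card α).choose #W * #{σ : Equiv.Perm α | Disjoint V (W.map σ.toEmbedding)}
      = ∑ W' ∈ powersetCard #W univ, #{σ : Equiv.Perm α | Disjoint V (W'.map σ.toEmbedding)} := by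
        rw [sum_congr rfl fun W' hW' ↦
          card_perm_disjoint_map_congr V (mem_powersetCard.1 hW').2.symm]
        simp
    _ = ∑ σ : Equiv.Perm α, #{W' ∈ powersetCard #W univ | Disjoint V (W'.map σ.toEmbedding)} :=
        sum_card_bipartiteAbove_eq_sum_card_bipartiteBelow _
    _ = (Fintype.card α).factorial * (Fintype.card α - #V).choose #W := by
        simp [hσ, Fintype.card_perm]

open Nat in
lemma card_perm_disjoint_map {V W : Finset α} (h : #V + #W ≤ Fintype.card α) :
    #{σ : Equiv.Perm α | Disjoint V (W.map σ.toEmbedding)} =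
      (Fintype.card α - #W)! * (Fintype.card α - #V)! / (Fintype.card α - (#V + #W))! := by
  set N := Fintype.card α
  set c := #{σ : Equiv.Perm α | Disjoint V (W.map σ.toEmbedding)}
  have hN : N.choose #W * (#W)! * (N - #W)! = N ! :=
    choose_mul_factorial_mul_factorial (by lia)
  have hV : (N - #V).choose #W * (#W)! * (N - (#V + #W))! = (N - #V)! := by
    rw [← Nat.sub_sub]
    exact choose_mul_factorial_mul_factorial (by lia)
  have hc : N.choose #W * c = N ! * (N - #V).choose #W := choose_mul_card_perm_disjoint_map V W
  refine (Nat.div_eq_of_eq_mul_left (factorial_pos _) ?_).symm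
  refine Nat.eq_of_mul_eq_mul_left (factorial_pos N) ?_
  calc N ! * ((N - #W)! * (N - #V)!)
      = N ! * (N - #V).choose #W * ((#W)! * (N - (#V + #W))! * (N - #W)!) := by rw [← hV]; ring
    _ = N.choose #W * (#W)! * (N - #W)! * (c * (N - (#V + #W))!) := by rw [← hc]; ring
    _ = N ! * (c * (N - (#V + #W))!) := by rw [hN]

variable {κ : Type*} {β : κ → Type*}

lemma card_preimage_sigmaMk [DecidableEq κ] (V : Finset (Σ j, β j)) (j : κ) :
    #(V.preimage (Sigma.mk j) sigma_mk_injective.injOn) = #{x ∈ V | x.1 = j} := by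
  classical
  rw [card_preimage]
  simp [Set.range_sigmaMk]

lemma card_pi_perm_disjoint_map [Fintype κ] [DecidableEq κ] [∀ j, Fintype (β j)]
    [∀ j, DecidableEq (β j)] (V W : Finset (Σ j, β j)) :
    #{π : ∀ j, Equiv.Perm (β j) | Disjoint V (W.map (Equiv.sigmaCongrRight π).toEmbedding)} =
      ∏ j, #{σ : Equiv.Perm (β j) | Disjoint (V.preimage (Sigma.mk j) sigma_mk_injective.injOn)
        ((W.preimage (Sigma.mk j) sigma_mk_injective.injOn).map σ.toEmbedding)} := by
  rw [← Fintype.card_piFinset]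
  congr 1
  ext π
  simp [disjoint_right, Sigma.forall]

end Counting

section FirstReturn

variable {ι R : Type*} [Fintype ι] [DecidableEq ι] [CommRing R]

lemma det_one_sub_eq_one_of_lt {α : Type*} [LinearOrder α] {M : Matrix ι ι R} (b : ι → α)
    (hM : ∀ x y, M x y ≠ 0 → b x < b y) : det (1 - M) = 1 := by
  have hzero {x y : ι} (h : b y ≤ b x) : M x y = 0 := by
    by_contra hne
    exact (hM x y hne).not_ge h
  have htri : BlockTriangular (1 - M) b := fun x y h ↦ by
    have hne : x ≠ y := by rintro rfl; exact h.false
    simp [hne, hzero h.le]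
  rw [htri.det]
  refine prod_eq_one fun a _ ↦ ?_
  have hblock : (1 - M).toSquareBlock b a = 1 := by
    ext x y
    simp [toSquareBlock_def, one_apply, Subtype.ext_iff, hzero (y.2.trans x.2.symm).le]
  rw [hblock, det_one]

variable {M : Matrix ι ι R} (p : ι → Prop) [DecidablePred p] {m : ℕ}

lemma det_ite_geom_sum_eq_one (hm : 0 < m)
    (hreturn : ∀ i, 0 < i → i < m → ∀ x y, p x → p y → (M ^ i) x y = 0) :
    det (of fun x y ↦ if p x then (∑ i ∈ range m, M ^ i) x y else (1 : Matrix ι ι R) x y) = 1 := by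
  rw [twoBlockTriangular_det _ p fun x hx y hy ↦ by
    simp [hx, show x ≠ y by rintro rfl; exact hx hy]]
  have hp : toSquareBlockProp (of fun x y ↦ if p x then (∑ i ∈ range m, M ^ i) x y
      else (1 : Matrix ι ι R) x y) p = 1 := by
    ext x y
    have hsum : (∑ i ∈ range m, M ^ i) x y = (M ^ 0) x y := by
      rw [Matrix.sum_apply]
      exact sum_eq_single_of_mem 0 (mem_range.2 hm) fun i hi h0 ↦
        hreturn i (Nat.pos_of_ne_zero h0) (mem_range.1 hi) x y x.2 y.2
    simp [toSquareBlockProp_def, x.2, hsum, one_apply, Subtype.ext_iff]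
  have hnp : toSquareBlockProp (of fun x y ↦ if p x then (∑ i ∈ range m, M ^ i) x y
      else (1 : Matrix ι ι R) x y) (fun x ↦ ¬p x) = 1 := by
    ext x y
    simp [toSquareBlockProp_def, x.2, one_apply, Subtype.ext_iff]
  rw [hp, hnp, det_one, det_one, one_mul]

lemma det_one_sub_eq_of_first_return (hm : 0 < m)
    (hreturn : ∀ i, 0 < i → i < m → ∀ x y, p x → p y → (M ^ i) x y = 0)
    (hclosed : ∀ x y, p x → ¬p y → (M ^ m) x y = 0) :
    det (1 - M) = det (1 - (M ^ m).toSquareBlockProp p) *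
      det (1 - M.toSquareBlockProp fun x ↦ ¬p x) := by
  -- Multiplying by `L` replaces the rows of `1 - M` in `p` by those of `1 - M ^ m`.
  let L : Matrix ι ι R :=
    of fun x y ↦ if p x then (∑ i ∈ range m, M ^ i) x y else (1 : Matrix ι ι R) x y
  let N : Matrix ι ι R := of fun x y ↦ if p x then (1 - M ^ m) x y else (1 - M) x y
  have hLN : L * (1 - M) = N := by
    ext x y
    by_cases hx : p x
    · simpa [L, N, hx, mul_apply] using congrFun₂ (geom_sum_mul_neg M m) x y
    · simpa [L, N, hx, mul_apply] using congrFun₂ (one_mul (1 - M)) x y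
  have hNp : N.toSquareBlockProp p = 1 - (M ^ m).toSquareBlockProp p := by
    ext x y
    simp [N, toSquareBlockProp_def, x.2, one_apply, Subtype.ext_iff]
  have hNnp : N.toSquareBlockProp (fun x ↦ ¬p x) = 1 - M.toSquareBlockProp fun x ↦ ¬p x := by
    ext x y
    simp [N, toSquareBlockProp_def, x.2, one_apply, Subtype.ext_iff]
  have hN : ∀ x, p x → ∀ y, ¬p y → N x y = 0 := fun x hx y hy ↦ by
    simp [N, hx, hclosed x y hx hy, show x ≠ y by rintro rfl; exact hy hx]
  calc det (1 - M) = det L * det (1 - M) := by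
        rw [det_ite_geom_sum_eq_one p hm hreturn, one_mul]
    _ = det N := by rw [← det_mul, hLN]
    _ = _ := by rw [twoBlockTriangular_det' N p hN, hNp, hNnp]

end FirstReturn

section CyclicGrading

variable {ι R : Type*} [CommRing R] {d : ℕ} [NeZero d] {c : ι → Fin d} {M : Matrix ι ι R}

/-- `M` is the transition matrix of a graph whose edges all lead from degree `j` to degree `j + 1`,
for the degrees `c` in `ℤ/d`. -/
def IsCyclicallyGraded (c : ι → Fin d) (M : Matrix ι ι R) : Prop :=
  ∀ x y, M x y ≠ 0 → c y = c x + 1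

lemma eq_apply_zero_of_apply_add_one_eq {α : Type*} {f : Fin d → α} (h : ∀ j, f (j + 1) = f j)
    (j : Fin d) : f j = f 0 := by
  obtain ⟨m, rfl⟩ := Nat.exists_eq_succ_of_ne_zero (NeZero.ne d)
  induction j using Fin.induction with
  | zero => rfl
  | succ i ih => rw [← ih, ← h i.castSucc, Fin.coeSucc_eq_succ]

lemma lt_add_one_of_add_one_ne_zero {j : Fin d} (h : j + 1 ≠ 0) : j < j + 1 := by
  obtain ⟨m, rfl⟩ := Nat.exists_eq_succ_of_ne_zero (NeZero.ne d)
  refine Fin.lt_add_one_iff.2 (Fin.lt_last_iff_ne_last.2 ?_)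
  rintro rfl
  exact h (Fin.last_add_one m)

namespace IsCyclicallyGraded

lemma card_filter_eq [DecidableEq ι] (hM : IsCyclicallyGraded c M) {U : Finset ι}
    (hU : principalMinor M U ≠ 0) (j : Fin d) : #{x ∈ U | c x = j} = #{x ∈ U | c x = 0} := by
  refine eq_apply_zero_of_apply_add_one_eq (f := fun j ↦ #{x ∈ U | c x = j}) (fun j ↦ ?_) j
  rw [principalMinor, det_apply'] at hU
  obtain ⟨σ, -, hσ⟩ := exists_ne_zero_of_sum_ne_zero hU
  have hgrade (x : U) : c x = c (σ x) + 1 := hM _ _ fun h ↦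
    right_ne_zero_of_mul hσ (prod_eq_zero (mem_univ x) h)
  calc #{x ∈ U | c x = j + 1} = ∑ x : U, if c x = j + 1 then 1 else 0 := by
        rw [card_filter, sum_coe_sort U fun x ↦ if c x = j + 1 then 1 else 0]
    _ = ∑ x : U, if c (σ x) = j then 1 else 0 :=
        sum_congr rfl fun x _ ↦ by rw [hgrade x]; simp only [add_left_inj]
    _ = ∑ x : U, if c x = j then 1 else 0 :=
        Equiv.sum_comp σ fun x : U ↦ if c x = j then 1 else 0
    _ = #{x ∈ U | c x = j} := by
        rw [card_filter, sum_coe_sort U fun x ↦ if c x = j then 1 else 0]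

lemma card_eq [DecidableEq ι] (hM : IsCyclicallyGraded c M) {U : Finset ι}
    (hU : principalMinor M U ≠ 0) : #U = d * #{x ∈ U | c x = 0} := by
  rw [card_eq_sum_card_fiberwise (t := univ) (f := c) fun _ _ ↦ mem_univ _]
  simp [hM.card_filter_eq hU]

variable [Fintype ι] [DecidableEq ι]

open Fin.NatCast Fin.CommRing in
lemma apply_eq_add_of_pow_ne_zero (hM : IsCyclicallyGraded c M) {m : ℕ} {x y : ι}
    (h : (M ^ m) x y ≠ 0) : c y = c x + m := by
  induction m generalizing y with
  | zero =>
    obtain rfl : x = y := by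
      by_contra hne
      simp [hne] at h
    simp
  | succ m ih =>
    rw [pow_succ, mul_apply] at h
    obtain ⟨z, -, hz⟩ := exists_ne_zero_of_sum_ne_zero h
    rw [hM z y (right_ne_zero_of_mul hz), ih (left_ne_zero_of_mul hz), Nat.cast_succ, add_assoc]

open Fin.NatCast Fin.CommRing in
lemma det_one_sub (hM : IsCyclicallyGraded c M) :
    det (1 - M) = det (1 - (M ^ d).toSquareBlockProp (c · = 0)) := by
  have hreturn (i : ℕ) (hi : 0 < i) (hid : i < d) (x y : ι) (hx : c x = 0) (hy : c y = 0) :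
      (M ^ i) x y = 0 := by
    by_contra hne
    have hi0 : (i : Fin d) = 0 := by
      simpa [hx, hy] using (hM.apply_eq_add_of_pow_ne_zero hne).symm
    exact Nat.not_dvd_of_pos_of_lt hi hid (Fin.natCast_eq_zero.1 hi0)
  have hclosed (x y : ι) (hx : c x = 0) (hy : ¬c y = 0) : (M ^ d) x y = 0 := by
    by_contra hne
    exact hy (by simpa [hx] using hM.apply_eq_add_of_pow_ne_zero hne)
  have hrest : det (1 - M.toSquareBlockProp fun x ↦ ¬c x = 0) = 1 := by
    refine det_one_sub_eq_one_of_lt (fun x ↦ c x) fun x y hxy ↦ ?_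
    have hstep : c y = c x + 1 := hM _ _ hxy
    exact hstep ▸ lt_add_one_of_add_one_ne_zero (hstep ▸ y.2)
  rw [det_one_sub_eq_of_first_return _ (NeZero.pos d) hreturn hclosed, hrest, mul_one]

lemma charpolyRev_eq_expand (hM : IsCyclicallyGraded c M) :
    M.charpolyRev = expand R d ((M ^ d).toSquareBlockProp (c · = 0)).charpolyRev := by
  have hXM : IsCyclicallyGraded c ((X : R[X]) • M.map C) := fun x y h ↦
    hM x y fun h0 ↦ h (by simp [h0])
  have hpow : ((X : R[X]) • M.map C) ^ d = (X : R[X]) ^ d • (M ^ d).map C := by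
    rw [_root_.smul_pow, ← RingHom.mapMatrix_apply, ← map_pow, RingHom.mapMatrix_apply]
  rw [charpolyRev, hXM.det_one_sub, charpolyRev, AlgHom.map_det, hpow]
  congr 1
  ext1 x y
  simp [toSquareBlockProp_def, one_apply, apply_ite (expand R d)]

lemma principalMinorSum_block_zero (hM : IsCyclicallyGraded c M) (k : ℕ) :
    principalMinorSum ((M ^ d).toSquareBlockProp (c · = 0)) k =
      (-1) ^ k * (-1) ^ (d * k) * principalMinorSum M (d * k) := by
  have h := congrArg (coeff · (d * k)) hM.charpolyRev_eq_expand
  simp only [mul_comm d, coeff_expand_mul (NeZero.pos d), coeff_charpolyRev] at h ⊢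
  rw [mul_assoc, h, ← mul_assoc, ← pow_add, Even.neg_one_pow ⟨k, rfl⟩, one_mul]

end IsCyclicallyGraded

end CyclicGrading

section GradedAverage

open Nat

lemma card_pi_perm_disjoint_map_of_card_filter_eq {κ : Type*} [Fintype κ] [DecidableEq κ]
    {β : κ → Type*} [∀ j, Fintype (β j)] [∀ j, DecidableEq (β j)] {V W : Finset (Σ j, β j)}
    {i l : ℕ} (hV : ∀ j, #{x ∈ V | x.1 = j} = i) (hW : ∀ j, #{x ∈ W | x.1 = j} = l)
    (hil : ∀ j, i + l ≤ Fintype.card (β j)) :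
    #{π : ∀ j, Equiv.Perm (β j) | Disjoint V (W.map (Equiv.sigmaCongrRight π).toEmbedding)} =
      ∏ j, ((Fintype.card (β j) - l)! * (Fintype.card (β j) - i)! /
        (Fintype.card (β j) - (i + l))!) := by
  rw [card_pi_perm_disjoint_map]
  refine prod_congr rfl fun j _ ↦ ?_
  rw [card_perm_disjoint_map] <;> simp only [card_preimage_sigmaMk, hV, hW, hil]

variable {d : ℕ} [NeZero d] {β : Fin d → Type*} [∀ j, Fintype (β j)] [∀ j, DecidableEq (β j)]
  {R : Type*} [CommRing R] {A D : Matrix (Σ j, β j) (Σ j, β j) R} {k : ℕ}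

lemma card_disjoint_mul_principalMinor_mul (hA : IsCyclicallyGraded Sigma.fst A)
    (hD : IsCyclicallyGraded Sigma.fst D) (hk : ∀ j, k ≤ Fintype.card (β j))
    (V W : Finset (Σ j, β j)) :
    (if #V + #W = d * k then
        (#{π : ∀ j, Equiv.Perm (β j) |
          Disjoint V (W.map (Equiv.sigmaCongrRight π).toEmbedding)} : R) *
            (principalMinor A V * principalMinor D W) else 0) =
      ∑ p ∈ antidiagonal k, if #V = d * p.1 ∧ #W = d * p.2 then
        ((∏ j, ((Fintype.card (β j) - p.2)! * (Fintype.card (β j) - p.1)! /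
          (Fintype.card (β j) - k)!) : ℕ) : R) * (principalMinor A V * principalMinor D W)
        else 0 := by
  by_cases hzero : principalMinor A V * principalMinor D W = 0
  · simp [hzero]
  have hV := hA.card_filter_eq (left_ne_zero_of_mul hzero)
  have hW := hD.card_filter_eq (right_ne_zero_of_mul hzero)
  rw [hA.card_eq (left_ne_zero_of_mul hzero), hD.card_eq (right_ne_zero_of_mul hzero)]
  generalize #{x ∈ V | x.1 = 0} = i at hV ⊢
  generalize #{x ∈ W | x.1 = 0} = l at hW ⊢
  simp only [← mul_add, Nat.mul_right_inj (NeZero.ne d)]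
  split_ifs with hil
  · subst hil
    rw [sum_eq_single_of_mem (i, l) (mem_antidiagonal.2 rfl), if_pos ⟨rfl, rfl⟩,
      card_pi_perm_disjoint_map_of_card_filter_eq hV hW hk]
    rintro p - hp
    exact if_neg fun h ↦ hp (Prod.ext h.1.symm h.2.symm)
  · refine (sum_eq_zero fun p hp ↦ if_neg fun h ↦ hil ?_).symm
    rw [h.1, h.2, mem_antidiagonal.1 hp]

theorem sum_perm_sum_signVec_principalMinorSum (hA : IsCyclicallyGraded Sigma.fst A)
    (hD : IsCyclicallyGraded Sigma.fst D) (hk : ∀ j, k ≤ Fintype.card (β j)) :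
    ∑ π : ∀ j, Equiv.Perm (β j), ∑ ε : (Σ j, β j) → Bool,
        principalMinorSum (diagonal (signVec R ε) *
          A.submatrix (Equiv.sigmaCongrRight π) (Equiv.sigmaCongrRight π) *
            diagonal (signVec R ε) + D) (d * k) =
      2 ^ (∑ j, Fintype.card (β j)) * ∑ p ∈ antidiagonal k,
        ((∏ j, ((Fintype.card (β j) - p.2)! * (Fintype.card (β j) - p.1)! /
          (Fintype.card (β j) - k)!) : ℕ) : R) *
          (principalMinorSum A (d * p.1) * principalMinorSum D (d * p.2)) := by
  simp_rw [sum_principalMinorSum_signVec_conj_add, ← mul_sum, Fintype.card_sigma]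
  rw [sum_sum_disjoint_principalMinor_submatrix]
  simp_rw [card_disjoint_mul_principalMinor_mul hA hD hk]
  rw [sum_congr rfl fun V _ ↦ sum_comm, sum_comm]
  congr 1
  refine sum_congr rfl fun p _ ↦ ?_
  simp_rw [principalMinorSum, ← univ_filter_card_eq, sum_mul_sum, mul_sum, sum_filter, ite_and,
    sum_ite_irrel, sum_const_zero]

end GradedAverage

section CyclicBlockMatrix

variable {K : Type} [CommRing K]

lemma minorDet_self {m : ℕ} (M : Matrix (Fin m) (Fin m) K) (S : Finset (Fin m)) :
    minorDet M S S = principalMinor M S := by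
  rw [minorDet, dif_pos rfl]
  exact det_submatrix_equiv_self (S.orderIsoOfFin rfl).toEquiv
    (M.submatrix Subtype.val Subtype.val)

lemma minorSum_eq_principalMinorSum {m : ℕ} (M : Matrix (Fin m) (Fin m) K) (k : ℕ) :
    minorSum M k = principalMinorSum M k :=
  sum_congr rfl fun S _ ↦ minorDet_self M S

lemma signMatrix_mul_permMatrix_inv {m : ℕ} (ε : Fin m → Bool) (π : Equiv.Perm (Fin m)) :
    (signMatrix K ε * π.permMatrix K)⁻¹ = (π⁻¹).permMatrix K * signMatrix K ε := by
  have hperm : π.permMatrix K * (π⁻¹).permMatrix K = 1 := by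
    rw [← permMatrix_mul, inv_mul_cancel, permMatrix_one]
  have hsign : signMatrix K ε * signMatrix K ε = 1 := by
    rw [signMatrix, diagonal_mul_diagonal, ← diagonal_one]
    congr! 2 with i
    split_ifs <;> simp
  refine inv_eq_right_inv ?_
  rw [mul_assoc, ← mul_assoc (π.permMatrix K), hperm, one_mul, hsign]

lemma signMatrix_mul_permMatrix_conj_apply {a b : ℕ} (ε : Fin a → Bool) (π : Equiv.Perm (Fin a))
    (ε' : Fin b → Bool) (π' : Equiv.Perm (Fin b)) (A : Matrix (Fin a) (Fin b) K)
    (x : Fin a) (y : Fin b) :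
    (signMatrix K ε * π.permMatrix K * A * (signMatrix K ε' * π'.permMatrix K)⁻¹) x y =
      signVec K ε x * A (π x) (π' y) * signVec K ε' y := by
  rw [signMatrix_mul_permMatrix_inv, ← Matrix.mul_assoc, signMatrix, signMatrix, mul_diagonal,
    Matrix.mul_assoc, Matrix.mul_assoc, diagonal_mul, Equiv.Perm.permMatrix, Equiv.Perm.permMatrix,
    PEquiv.toMatrix_toPEquiv_mul, PEquiv.mul_toMatrix_toPEquiv]
  rfl

variable {d : ℕ} [NeZero d] {n : Fin d → ℕ}

/-- The block matrix on the disjoint union of the index sets whose block in position `(j, j + 1)`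
is `M j`, all other blocks being zero. Its `d`-th power has the cyclic product as block `(0, 0)`. -/
def cyclicBlockMatrix {R : Type*} [CommRing R]
    (M : ∀ j : Fin d, Matrix (Fin (n j)) (Fin (n (j + 1))) R) :
    Matrix (Σ j, Fin (n j)) (Σ j, Fin (n j)) R :=
  of fun x y ↦ if h : y.1 = x.1 + 1 then M x.1 x.2 (Fin.cast (congrArg n h) y.2) else 0

lemma isCyclicallyGraded_cyclicBlockMatrix {R : Type*} [CommRing R]
    (M : ∀ j : Fin d, Matrix (Fin (n j)) (Fin (n (j + 1))) R) :
    IsCyclicallyGraded Sigma.fst (cyclicBlockMatrix M) := fun _ _ hxy ↦ by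
  by_contra hne
  exact hxy (dif_neg hne)

variable (M : ∀ j : Fin d, Matrix (Fin (n j)) (Fin (n (j + 1))) K)

open Fin.NatCast Fin.CommRing in
lemma cyclicBlockMatrix_pow_apply (m : ℕ) (x : Fin (n 0)) (y : Σ j, Fin (n j)) :
    (cyclicBlockMatrix M ^ m) ⟨0, x⟩ y =
      if h : y.1 = (m : Fin d) then cycProdAux M m x (Fin.cast (congrArg n h) y.2) else 0 := by
  induction m generalizing y with
  | zero =>
    obtain ⟨j, y⟩ := y
    obtain rfl | hj := eq_or_ne j 0
    · simp [cycProdAux, colCast, one_apply, Fin.ext_iff]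
    · simp [hj, hj.symm]
  | succ m ih =>
    have hother (j : Fin d) (hj : j ≠ m) :
        ∑ z, (cyclicBlockMatrix M ^ m) ⟨0, x⟩ ⟨j, z⟩ * cyclicBlockMatrix M ⟨j, z⟩ y = 0 :=
      sum_eq_zero fun z _ ↦ by simp [ih, hj]
    rw [pow_succ, mul_apply, Fintype.sum_sigma, Fintype.sum_eq_single (m : Fin d) hother]
    by_cases hy : y.1 = (m : Fin d) + 1
    · simp only [ih]
      simp [cyclicBlockMatrix, hy, cycProdAux, colCast, mul_apply]
    · simp [cyclicBlockMatrix, hy]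

lemma cycProd_eq_submatrix :
    cycProd M = ((cyclicBlockMatrix M ^ d).toSquareBlockProp (·.1 = 0)).submatrix
      (Equiv.sigmaSubtype (0 : Fin d)).symm (Equiv.sigmaSubtype (0 : Fin d)).symm := by
  ext x y
  have hpow := cyclicBlockMatrix_pow_apply M d x ⟨0, y⟩
  simpa [cycProd, colCast, toSquareBlockProp_def, Equiv.sigmaSubtype] using hpow.symm

lemma minorSum_cycProd (k : ℕ) :
    minorSum (cycProd M) k =
      (-1) ^ k * (-1) ^ (d * k) * principalMinorSum (cyclicBlockMatrix M) (d * k) := by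
  rw [minorSum_eq_principalMinorSum, cycProd_eq_submatrix, principalMinorSum_submatrix_equiv,
    (isCyclicallyGraded_cyclicBlockMatrix M).principalMinorSum_block_zero]

lemma cyclicBlockMatrix_signMatrix_mul_permMatrix_conj_add
    (A D : ∀ j : Fin d, Matrix (Fin (n j)) (Fin (n (j + 1))) K)
    (ε : ∀ j, Fin (n j) → Bool) (π : ∀ j, Equiv.Perm (Fin (n j))) :
    cyclicBlockMatrix (fun j ↦ signMatrix K (ε j) * (π j).permMatrix K * A j *
        (signMatrix K (ε (j + 1)) * (π (j + 1)).permMatrix K)⁻¹ + D j) =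
      diagonal (signVec K (Sigma.uncurry ε)) *
        (cyclicBlockMatrix A).submatrix (Equiv.sigmaCongrRight π) (Equiv.sigmaCongrRight π) *
          diagonal (signVec K (Sigma.uncurry ε)) + cyclicBlockMatrix D := by
  have hsign (j : Fin d) (x : Fin (n j)) :
      signVec K (Sigma.uncurry ε) ⟨j, x⟩ = signVec K (ε j) x := rfl
  ext ⟨j, x⟩ ⟨j', y⟩
  obtain rfl | hj := eq_or_ne j' (j + 1)
  · simp [cyclicBlockMatrix, signMatrix_mul_permMatrix_conj_apply, hsign]
  · simp [cyclicBlockMatrix, hj]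

lemma sum_sum_minorSum_cycProd_conj_add
    (A D : ∀ j : Fin d, Matrix (Fin (n j)) (Fin (n (j + 1))) K) (k : ℕ) :
    ∑ ε : ∀ j, Fin (n j) → Bool, ∑ π : ∀ j, Equiv.Perm (Fin (n j)),
        minorSum (cycProd fun j ↦ signMatrix K (ε j) * (π j).permMatrix K * A j *
          (signMatrix K (ε (j + 1)) * (π (j + 1)).permMatrix K)⁻¹ + D j) k =
      (-1) ^ k * (-1) ^ (d * k) *
        ∑ π : ∀ j, Equiv.Perm (Fin (n j)), ∑ ε : (Σ j, Fin (n j)) → Bool,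
          principalMinorSum (diagonal (signVec K ε) *
            (cyclicBlockMatrix A).submatrix (Equiv.sigmaCongrRight π) (Equiv.sigmaCongrRight π) *
              diagonal (signVec K ε) + cyclicBlockMatrix D) (d * k) := by
  rw [sum_comm, mul_sum]
  refine sum_congr rfl fun π _ ↦ ?_
  rw [mul_sum]
  refine Fintype.sum_equiv (Equiv.piCurry fun _ _ ↦ Bool).symm _ _ fun ε ↦ ?_
  rw [minorSum_cycProd, cyclicBlockMatrix_signMatrix_mul_permMatrix_conj_add]
  rfl

end CyclicBlockMatrix

theorem stmt_9 {K : Type} [CommRing K] (d : ℕ) [NeZero d] (n : Fin d → ℕ)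
    (A D : ∀ j : Fin d, Matrix (Fin (n j)) (Fin (n (j + 1))) K)
    (k : ℕ) (hk : ∀ j, k ≤ n j) :
    ∑ ε : (∀ j : Fin d, Fin (n j) → Bool),
      ∑ π : (∀ j : Fin d, Equiv.Perm (Fin (n j))),
        minorSum (cycProd (fun j =>
          (signMatrix K (ε j) * (π j).permMatrix K) * A j *
              (signMatrix K (ε (j + 1)) * (π (j + 1)).permMatrix K)⁻¹ + D j)) k =
      (1 + 1 : K) ^ (∑ j : Fin d, n j) *
        ∑ i ∈ Finset.range (k + 1),
          (∏ j : Fin d,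
            (((n j - k + i).factorial * (n j - i).factorial / (n j - k).factorial : ℕ) : K)) *
            minorSum (cycProd A) i * minorSum (cycProd D) (k - i) := by
  rw [sum_sum_minorSum_cycProd_conj_add, sum_perm_sum_signVec_principalMinorSum
    (isCyclicallyGraded_cyclicBlockMatrix A) (isCyclicallyGraded_cyclicBlockMatrix D)
    (by simpa using hk), Nat.sum_antidiagonal_eq_sum_range_succ_mk, mul_left_comm, mul_sum]
  simp only [Fintype.card_fin, one_add_one_eq_two, minorSum_cycProd]
  congr 1
  refine sum_congr rfl fun i hi ↦ ?_
  obtain ⟨l, rfl⟩ := Nat.exists_eq_add_of_le (mem_range_succ_iff.1 hi)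
  have hsub (j : Fin d) : n j - l = n j - (i + l) + i := by have := hk j; lia
  simp only [Nat.add_sub_cancel_left, hsub, mul_add, pow_add, Nat.cast_prod]
  ring
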